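/- Let M be a submanifold of a space form and let ν₁ be a parallel sub-bundle of rank m of the normal bundle of M (parallel with respect to the normal connection). Consider the generalized Gauss map G₁ : M → Gr_m, p ↦ ν₁(p), into the appropriate Grassmannian of m-dimensional linear subspaces of the ambient linear space. Then for every p ∈ M, the kernel of the differential d(G₁)_p equals the generalized nullity space 𝒩¹_p = {v ∈ T_pM : A_ξ v = 0 for all ξ ∈ ν₁(p)}, the common kernel of the shape operators of vectors in ν₁(p). -/

import Mathlib

noncomputable section

open Set

/-- The three model space forms: Euclidean space, the round sphere, hyperbolic space. -/
inductive SpaceFormKind : Type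
  | euclidean : SpaceFormKind
  | sphere : SpaceFormKind
  | hyperbolic : SpaceFormKind

/-- The sign of the `i`-th coordinate in the ambient bilinear form: for the hyperbolic case the
ambient linear space is the Lorentz space `ℝ^{D-1,1}` whose last coordinate is timelike. -/
def formSign (k : SpaceFormKind) (D : ℕ) (i : Fin D) : ℝ :=
  match k with
  | .hyperbolic => if (i : ℕ) + 1 = D then -1 else 1
  | _ => 1

/-- The ambient bilinear form: the Euclidean inner product in the euclidean and spherical cases,
the Lorentz (Minkowski) form in the hyperbolic case. -/
def aForm (k : SpaceFormKind) {D : ℕ} (x y : EuclideanSpace ℝ (Fin D)) : ℝ :=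
  ∑ i, formSign k D i * x i * y i

/-- The space form, realized inside its ambient linear space: all of `ℝ^D`, the unit sphere,
or the hyperboloid model of hyperbolic space in Lorentz space. -/
def spaceForm (k : SpaceFormKind) (D : ℕ) : Set (EuclideanSpace ℝ (Fin D)) :=
  match k with
  | .euclidean => Set.univ
  | .sphere => {x | aForm .sphere x x = 1}
  | .hyperbolic => {x | aForm .hyperbolic x x = -1 ∧ ∀ i : Fin D, (i : ℕ) + 1 = D → 0 < x i}

/-- The normal space of the space form itself inside the ambient linear space at a point `p`:
trivial in the euclidean case, and spanned by the position vector in the other two cases. -/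
def radialAt (k : SpaceFormKind) {D : ℕ} (p : EuclideanSpace ℝ (Fin D)) :
    Submodule ℝ (EuclideanSpace ℝ (Fin D)) :=
  match k with
  | .euclidean => ⊥
  | _ => Submodule.span ℝ {p}

/-- The tangent space of a subset `S ⊆ ℝ^D` at `p`: the span of all velocities at `0` of smooth
curves inside `S` passing through `p` at time `0`. -/
def TangentAt {D : ℕ} (S : Set (EuclideanSpace ℝ (Fin D))) (p : EuclideanSpace ℝ (Fin D)) :
    Submodule ℝ (EuclideanSpace ℝ (Fin D)) :=
  Submodule.span ℝ {v | ∃ c : ℝ → EuclideanSpace ℝ (Fin D),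
    ContDiff ℝ (⊤ : ℕ∞) c ∧ (∀ t, c t ∈ S) ∧ c 0 = p ∧ deriv c 0 = v}

/-- `φ : U → ℝ^D` is a (smooth, embedded) local parametrization of `S` around `p`. -/
structure IsLocalParam {D : ℕ} (S : Set (EuclideanSpace ℝ (Fin D))) (n : ℕ)
    (φ : EuclideanSpace ℝ (Fin n) → EuclideanSpace ℝ (Fin D))
    (U : Set (EuclideanSpace ℝ (Fin n))) (p : EuclideanSpace ℝ (Fin D)) : Prop where
  isOpen : IsOpen U
  smooth : ContDiffOn ℝ (⊤ : ℕ∞) φ U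
  immersion : ∀ x ∈ U, Function.Injective (fderivWithin ℝ φ U x)
  injOn : Set.InjOn φ U
  openImage : ∃ V, IsOpen V ∧ φ '' U = S ∩ V
  mem : p ∈ φ '' U
  embedding : ∃ ψ, ContinuousOn ψ (φ '' U) ∧ ∀ x ∈ U, ψ (φ x) = x

/-- `S ⊆ ℝ^D` is an `n`-dimensional smooth embedded submanifold. -/
def IsSubmanifold {D : ℕ} (S : Set (EuclideanSpace ℝ (Fin D))) (n : ℕ) : Prop :=
  ∀ p ∈ S, ∃ φ U, IsLocalParam S n φ U p

/-- The nullity space at `p` of the second fundamental form `α` of `S`, viewed as a submanifold of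
the space form of kind `k`:  a tangent vector `v` is in the nullity iff `α(v, w) = 0` for all
`w ∈ T_pS`; concretely, iff for every smooth tangent vector field `W` along a smooth curve `c` in
`S` with `c(0) = p`, `c'(0) = v`, the derivative `W'(0)` has no component normal to `S` inside the
space form, i.e. `W'(0)` lies in the sum of `T_pS` and the normal space of the space form itself. -/
def nullityAt (k : SpaceFormKind) {D : ℕ} (S : Set (EuclideanSpace ℝ (Fin D)))
    (p : EuclideanSpace ℝ (Fin D)) : Set (EuclideanSpace ℝ (Fin D)) :=
  {v | v ∈ TangentAt S p ∧ ∀ c W : ℝ → EuclideanSpace ℝ (Fin D),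
    ContDiff ℝ (⊤ : ℕ∞) c → (∀ t, c t ∈ S) → c 0 = p → deriv c 0 = v →
    ContDiff ℝ (⊤ : ℕ∞) W → (∀ t, W t ∈ TangentAt S (c t)) →
    deriv W 0 ∈ TangentAt S p ⊔ radialAt k p}

/-- The index of nullity of `S` at `p`. -/
def nullityIndex (k : SpaceFormKind) {D : ℕ} (S : Set (EuclideanSpace ℝ (Fin D)))
    (p : EuclideanSpace ℝ (Fin D)) : ℕ :=
  Set.finrank ℝ (nullityAt k S p)

/-- `γ : ℝ → ℝ^D` is a geodesic of the Riemannian (resp. Lorentzian-induced) submanifold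
`S` of the space form of kind `k`: a smooth curve in `S` whose acceleration is orthogonal,
with respect to the ambient bilinear form, to all tangent spaces of `S`. -/
structure IsGeodesicOn (k : SpaceFormKind) {D : ℕ} (S : Set (EuclideanSpace ℝ (Fin D)))
    (γ : ℝ → EuclideanSpace ℝ (Fin D)) : Prop where
  smooth : ContDiff ℝ (⊤ : ℕ∞) γ
  mem : ∀ t, γ t ∈ S
  accel_normal : ∀ t, ∀ v ∈ TangentAt S (γ t), aForm k (deriv (deriv γ) t) v = 0

/-- `S` is a (geodesically, equivalently metrically) complete Riemannian manifold: every
initial condition gives rise to a geodesic defined on all of `ℝ`. -/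
def GeodComplete (k : SpaceFormKind) {D : ℕ} (S : Set (EuclideanSpace ℝ (Fin D))) : Prop :=
  ∀ p ∈ S, ∀ v ∈ TangentAt S p, ∃ γ, IsGeodesicOn k S γ ∧ γ 0 = p ∧ deriv γ 0 = v

/-- The set of points of `S` where the index of nullity is minimal. -/
def minNullitySet (k : SpaceFormKind) {D : ℕ} (S : Set (EuclideanSpace ℝ (Fin D))) :
    Set (EuclideanSpace ℝ (Fin D)) :=
  {q | q ∈ S ∧ ∀ r ∈ S, nullityIndex k S q ≤ nullityIndex k S r}

/-- The maximal integral manifold (leaf) through `p` of the nullity distribution of `S`,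
restricted to the subset `A`: all points reachable from `p` by smooth curves inside `A`
everywhere tangent to the nullity distribution. -/
def leafThrough (k : SpaceFormKind) {D : ℕ} (S A : Set (EuclideanSpace ℝ (Fin D)))
    (p : EuclideanSpace ℝ (Fin D)) : Set (EuclideanSpace ℝ (Fin D)) :=
  {q | ∃ c : ℝ → EuclideanSpace ℝ (Fin D), ContDiff ℝ (⊤ : ℕ∞) c ∧ (∀ t, c t ∈ A) ∧
    (∀ t, deriv c t ∈ nullityAt k S (c t)) ∧ c 0 = p ∧ c 1 = q}

/-- The dimension of the ambient linear space: `n + k` for a submanifold `M^n ⊆ ℝ^{n+k}`,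
`n + k + 1` for `M^n ⊆ S^{n+k} ⊆ ℝ^{n+k+1}` and for `M^n ⊆ H^{n+k} ⊆ ℝ^{n+k,1}`. -/
def ambientDim (k : SpaceFormKind) (n codim : ℕ) : ℕ :=
  match k with
  | .euclidean => n + codim
  | _ => n + codim + 1

/-- `v` is a normal vector of `S` at `p` inside the space form of kind `k`: it is tangent to the
space form and orthogonal (for the ambient form) to the tangent space of `S`. -/
def IsNormalVec (k : SpaceFormKind) {D : ℕ} (S : Set (EuclideanSpace ℝ (Fin D)))
    (p v : EuclideanSpace ℝ (Fin D)) : Prop :=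
  v ∈ TangentAt (spaceForm k D) p ∧ ∀ w ∈ TangentAt S p, aForm k v w = 0

/-- `ν₁` is a rank `m` smooth sub-bundle of the normal bundle of the submanifold `S` of the space
form of kind `k`, which is parallel with respect to the normal connection, i.e. invariant under
normal parallel transport (a normal field `ξ` along a curve is normal-parallel iff its derivative
has no component normal to `S` inside the space form, i.e. `ξ' ∈ T S ⊔ radial`). -/
structure IsParallelNormalSubbundle (k : SpaceFormKind) {D : ℕ}
    (S : Set (EuclideanSpace ℝ (Fin D)))
    (ν₁ : EuclideanSpace ℝ (Fin D) → Submodule ℝ (EuclideanSpace ℝ (Fin D))) (m : ℕ) : Prop where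
  normal : ∀ p ∈ S, ∀ v ∈ ν₁ p, IsNormalVec k S p v
  rank : ∀ p ∈ S, Module.finrank ℝ (ν₁ p) = m
  smooth : ∀ p ∈ S, ∃ V ∈ nhds p,
    ∃ ξ : Fin m → (EuclideanSpace ℝ (Fin D) → EuclideanSpace ℝ (Fin D)),
      (∀ i, ContDiff ℝ (⊤ : ℕ∞) (ξ i)) ∧ ∀ q ∈ V ∩ S, ν₁ q = Submodule.span ℝ (Set.range fun i => ξ i q)
  parallel : ∀ c ξ : ℝ → EuclideanSpace ℝ (Fin D), ContDiff ℝ (⊤ : ℕ∞) c → (∀ t, c t ∈ S) →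
    ContDiff ℝ (⊤ : ℕ∞) ξ → (∀ t, IsNormalVec k S (c t) (ξ t)) →
    (∀ t, deriv ξ t ∈ TangentAt S (c t) ⊔ radialAt k (c t)) →
    ξ 0 ∈ ν₁ (c 0) → ∀ t, ξ t ∈ ν₁ (c t)

/-- The generalized nullity space `𝒩¹_p` associated to the normal sub-bundle `ν₁`: the common
kernel of the shape operators `A_ξ`, `ξ ∈ ν₁(p)`.  Concretely, a tangent vector `v` lies in
`𝒩¹_p` iff for every smooth tangent field `W` along a smooth curve `c` in `S` with `c(0) = p`,
`c'(0) = v`, one has `⟨α(v, W(0)), ξ⟩ = ⟨W'(0), ξ⟩ = 0` for all `ξ ∈ ν₁(p)`. -/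
def gNullityAt (k : SpaceFormKind) {D : ℕ} (S : Set (EuclideanSpace ℝ (Fin D)))
    (ν₁ : EuclideanSpace ℝ (Fin D) → Submodule ℝ (EuclideanSpace ℝ (Fin D)))
    (p : EuclideanSpace ℝ (Fin D)) : Set (EuclideanSpace ℝ (Fin D)) :=
  {v | v ∈ TangentAt S p ∧ ∀ c W : ℝ → EuclideanSpace ℝ (Fin D),
    ContDiff ℝ (⊤ : ℕ∞) c → (∀ t, c t ∈ S) → c 0 = p → deriv c 0 = v →
    ContDiff ℝ (⊤ : ℕ∞) W → (∀ t, W t ∈ TangentAt S (c t)) →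
    ∀ ξ ∈ ν₁ p, aForm k (deriv W 0) ξ = 0}

/-- The set of points of `S` where the dimension of the generalized nullity space is minimal. -/
def gMinNullitySet (k : SpaceFormKind) {D : ℕ} (S : Set (EuclideanSpace ℝ (Fin D)))
    (ν₁ : EuclideanSpace ℝ (Fin D) → Submodule ℝ (EuclideanSpace ℝ (Fin D))) :
    Set (EuclideanSpace ℝ (Fin D)) :=
  {q | q ∈ S ∧ ∀ r ∈ S, Set.finrank ℝ (gNullityAt k S ν₁ q) ≤ Set.finrank ℝ (gNullityAt k S ν₁ r)}

/-- The maximal integral manifold (leaf) through `p` of the generalized nullity distribution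
`𝒩¹`, restricted to the subset `A`. -/
def gLeafThrough (k : SpaceFormKind) {D : ℕ} (S : Set (EuclideanSpace ℝ (Fin D)))
    (ν₁ : EuclideanSpace ℝ (Fin D) → Submodule ℝ (EuclideanSpace ℝ (Fin D)))
    (A : Set (EuclideanSpace ℝ (Fin D))) (p : EuclideanSpace ℝ (Fin D)) :
    Set (EuclideanSpace ℝ (Fin D)) :=
  {q | ∃ c : ℝ → EuclideanSpace ℝ (Fin D), ContDiff ℝ (⊤ : ℕ∞) c ∧ (∀ t, c t ∈ A) ∧
    (∀ t, deriv c t ∈ gNullityAt k S ν₁ (c t)) ∧ c 0 = p ∧ c 1 = q}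

/-!
Let `ξ` be a section of `ν₁` along a curve `c` in `S` with velocity `v` at `p`. If `Q` denotes the
orthogonal projection onto the tangent spaces of `S` along `c`, normal parallel transport is the
flow of the linear equation `Φ' = -Q' Φ`, restricted to normal vectors. It preserves `ν₁`, so
`ξ = Φ ζ` with `ζ` in the fixed space `ν₁(p)`, whence `ξ'(0) ∈ ν₁(p) + T_pS`, with tangential part
`-A_ξ v`. This part is determined by `⟨ξ', W⟩ = -⟨ξ, W'⟩` for tangent fields `W`, so it vanishes for
every `ξ` exactly when `v` lies in the common kernel of the shape operators. In the hyperbolic case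
the ambient form is indefinite, but it is positive definite orthogonally to the timelike position
vector, hence nondegenerate on the tangent spaces of `S`.
-/

section

open Filter
open scoped ContDiff Topology NNReal

variable {V : Type*} [NormedAddCommGroup V] [NormedSpace ℝ V]

theorem hasDerivAt_deriv_of_contDiff {f : ℝ → V} (hf : ContDiff ℝ ∞ f) (t : ℝ) :
    HasDerivAt f (deriv f t) t :=
  (hf.differentiable (by simp) t).hasDerivAt

/-- A smooth time change of the line fixing `0` with unit speed there. Composing with one turns a
curve that behaves well only near time `0` into a globally well-behaved curve with the same
velocity. -/
structure IsReparam (s : ℝ → ℝ) : Prop where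
  contDiff : ContDiff ℝ ∞ s
  map_zero : s 0 = 0
  hasDerivAt_zero : HasDerivAt s 1 0

theorem exists_isReparam_of_eventually {P : ℝ → Prop} (hP : ∀ᶠ t in 𝓝 0, P t) :
    ∃ s, IsReparam s ∧ ∀ t, P (s t) := by
  obtain ⟨ε, hε, hball⟩ := Metric.eventually_nhds_iff.mp hP
  refine ⟨fun t => ε / 2 * Real.sin (t / (ε / 2)), ⟨by fun_prop, by simp, ?_⟩, fun t => hball ?_⟩
  · have hsin : HasDerivAt (fun t => ε / 2 * Real.sin (t / (ε / 2))) _ 0 :=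
      ((hasDerivAt_id (0 : ℝ)).div_const (ε / 2)).sin.const_mul (ε / 2)
    convert hsin using 1
    simp [hε.ne']
  · rw [Real.dist_0_eq_abs, abs_mul, abs_of_pos (half_pos hε)]
    nlinarith [Real.abs_sin_le_one (t / (ε / 2))]

theorem IsReparam.hasDerivAt_comp {s : ℝ → ℝ} (hs : IsReparam s) {f : ℝ → V} {f' : V}
    (hf : HasDerivAt f f' 0) : HasDerivAt (f ∘ s) f' 0 := by
  simpa using HasDerivAt.scomp (0 : ℝ) (hs.map_zero.symm ▸ hf) hs.hasDerivAt_zero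

section LinearODE

variable {A : ℝ → V →L[ℝ] V}

theorem exists_eventually_hasDerivAt_linear [CompleteSpace V] (hA : Continuous A) (x₀ : V) :
    ∃ x : ℝ → V, x 0 = x₀ ∧ ∀ᶠ t in 𝓝 0, HasDerivAt x (A t (x t)) t := by
  set M : ℝ≥0 := ‖A 0‖₊ + 1
  set L : ℝ≥0 := M * (‖x₀‖₊ + 1)
  have hM : ∀ᶠ t in 𝓝 0, ‖A t‖₊ < M :=
    hA.nnnorm.continuousAt.eventually_lt_const (lt_add_one _)
  have hL : ∀ᶠ t : ℝ in 𝓝 0, L * |t| < 1 :=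
    (by fun_prop : Continuous fun t : ℝ => L * |t|).continuousAt.eventually_lt_const (by simp)
  obtain ⟨ε, hε, hball⟩ := Metric.nhds_basis_closedBall.eventually_iff.mp (hM.and hL)
  rw [Real.closedBall_eq_Icc, zero_sub, zero_add] at hball
  have hpl : IsPicardLindelof (fun t => A t) (⟨0, by simp [hε.le]⟩ : Icc (-ε) ε) x₀ 1 0 L M :=
    { lipschitzOnWith := fun t ht => ((A t).lipschitz.weaken (hball ht).1.le).lipschitzOnWith
      continuousOn := fun x _ => (hA.clm_apply continuous_const).continuousOn
      norm_le := fun t ht x hx => by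
        have hx' : ‖x‖ ≤ ‖x₀‖ + 1 := by
          simpa using norm_le_of_mem_closedBall hx
        calc ‖A t x‖ ≤ ‖A t‖ * ‖x‖ := (A t).le_opNorm x
          _ ≤ M * (‖x₀‖ + 1) :=
            mul_le_mul (mod_cast (hball ht).1.le) hx' (norm_nonneg x) M.coe_nonneg
      mul_max_le := by
        simpa [abs_of_pos hε] using (hball (right_mem_Icc.mpr (by linarith))).2.le }
  obtain ⟨x, hx₀, hx⟩ := hpl.exists_eq_forall_mem_Icc_hasDerivWithinAt₀
  refine ⟨x, hx₀, ?_⟩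
  filter_upwards [Ioo_mem_nhds (neg_lt_zero.mpr hε) hε] with t ht
  exact (hx t (Ioo_subset_Icc_self ht)).hasDerivAt (Icc_mem_nhds ht.1 ht.2)

theorem eq_zero_of_hasDerivAt_linear (hA : Continuous A) {x : ℝ → V}
    (hx : ∀ t, HasDerivAt x (A t (x t)) t) (h0 : x 0 = 0) (t : ℝ) : x t = 0 := by
  obtain ⟨K, hK⟩ := (isCompact_Icc (a := -(|t| + 1)) (b := |t| + 1)).exists_bound_of_continuousOn
    hA.norm.continuousOn
  refine ODE_solution_unique_of_mem_Ioo (v := fun t => A t) (s := fun _ => univ) (t₀ := 0)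
    (K := K.toNNReal) (g := 0) (a := -(|t| + 1)) (b := |t| + 1) (fun r hr => ?_)
    ⟨by linarith [abs_nonneg t], by positivity⟩ (fun r _ => ⟨hx r, mem_univ _⟩)
    (fun r _ => ⟨by simp, mem_univ _⟩) h0
    ⟨by linarith [neg_abs_le t], by linarith [le_abs_self t]⟩
  refine ((A r).lipschitz.weaken ?_).lipschitzOnWith
  exact NNReal.coe_le_coe.mp ((by simpa using hK r (Ioo_subset_Icc_self hr) : ‖A r‖ ≤ K).trans
    (Real.le_coe_toNNReal K))

theorem contDiff_of_hasDerivAt_linear (hA : ContDiff ℝ ∞ A) {x : ℝ → V}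
    (hx : ∀ t, HasDerivAt x (A t (x t)) t) : ContDiff ℝ ∞ x := by
  have hderiv : deriv x = fun t => A t (x t) := funext fun t => (hx t).deriv
  refine contDiff_infty.mpr fun n => ?_
  induction n with
  | zero => exact contDiff_zero.mpr (continuous_iff_continuousAt.mpr fun t => (hx t).continuousAt)
  | succ n ih =>
    rw [Nat.cast_succ, contDiff_succ_iff_deriv, hderiv]
    refine ⟨fun t => (hx t).differentiableAt, by simp, ?_⟩
    exact (hA.of_le (mod_cast le_top)).clm_apply ih

end LinearODE

section Idempotents

variable {Q : ℝ → V →L[ℝ] V}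

theorem exists_isReparam_hasDerivAt_neg_deriv_comp [CompleteSpace V] (hQ : ContDiff ℝ ∞ Q) :
    ∃ (s : ℝ → ℝ) (Φ : ℝ → V →L[ℝ] V), IsReparam s ∧ ContDiff ℝ ∞ Φ ∧ Φ 0 = .id ℝ V ∧
      ∀ t, HasDerivAt Φ (-(deriv (Q ∘ s) t ∘L Φ t)) t := by
  set A : (ℝ → V →L[ℝ] V) → ℝ → (V →L[ℝ] V) →L[ℝ] V →L[ℝ] V :=
    fun P t => .compL ℝ V V V (-deriv P t)
  have hA : ∀ {P}, ContDiff ℝ ∞ P → ContDiff ℝ ∞ (A P) := fun hP =>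
    (ContinuousLinearMap.compL ℝ V V V).contDiff.comp (contDiff_infty_iff_deriv.mp hP).2.neg
  obtain ⟨Ψ, hΨ₀, hΨ⟩ := exists_eventually_hasDerivAt_linear (hA hQ).continuous (.id ℝ V)
  obtain ⟨s, hs, hΨs⟩ := exists_isReparam_of_eventually hΨ
  have hderiv : ∀ t, HasDerivAt (Ψ ∘ s) (A (Q ∘ s) t ((Ψ ∘ s) t)) t := fun t => by
    have hst := hasDerivAt_deriv_of_contDiff hs.contDiff t
    have hQs := (hasDerivAt_deriv_of_contDiff hQ (s t)).scomp t hst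
    have hAs : A (Q ∘ s) t (Ψ (s t)) = deriv s t • A Q (s t) (Ψ (s t)) := by
      simp [A, hQs.deriv]
    exact hAs ▸ (hΨs t).scomp t hst
  exact ⟨s, Ψ ∘ s, hs, contDiff_of_hasDerivAt_linear (hA (hQ.comp hs.contDiff)) hderiv,
    by simp [hs.map_zero, hΨ₀], fun t => by simpa [A] using hderiv t⟩

variable (hQ : ContDiff ℝ 1 Q) (hidem : ∀ t, IsIdempotentElem (Q t))
include hQ hidem

theorem deriv_idempotent_apply (t : ℝ) (x : V) :
    deriv Q t x = deriv Q t (Q t x) + Q t (deriv Q t x) := by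
  have hder := (hQ.differentiable one_ne_zero t).hasDerivAt
  have hmul := hder.mul hder
  rw [show Q * Q = Q from funext hidem] at hmul
  exact congr($(hmul.deriv) x)

variable {η : ℝ → V} (hη : ∀ t, HasDerivAt η (-deriv Q t (η t)) t) (h0 : Q 0 (η 0) = 0)
include hη h0

theorem idempotent_apply_eq_zero_of_hasDerivAt (t : ℝ) : Q t (η t) = 0 := by
  refine eq_zero_of_hasDerivAt_linear (A := deriv Q) (x := fun r => Q r (η r))
    (hQ.continuous_deriv le_rfl) (fun r => ?_) h0 t
  convert (hQ.differentiable one_ne_zero r).hasDerivAt.clm_apply (hη r) using 1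
  rw [map_neg, ← sub_eq_add_neg, eq_sub_iff_add_eq]
  exact (deriv_idempotent_apply hQ hidem r (η r)).symm

theorem deriv_eq_idempotent_apply_of_hasDerivAt (t : ℝ) :
    deriv η t = Q t (-deriv Q t (η t)) := by
  have hsplit := deriv_idempotent_apply hQ hidem t (η t)
  rw [idempotent_apply_eq_zero_of_hasDerivAt hQ hidem hη h0 t, map_zero, zero_add] at hsplit
  rw [(hη t).deriv, map_neg, ← hsplit]

end Idempotents

section OrthProj

variable {F : Type*} [NormedAddCommGroup F] [NormedSpace ℝ F]

/-- The form `B` is nondegenerate on the subspace `E`: no nonzero vector of `E` is left orthogonal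
to all of `E`. -/
def NondegenerateOn (B : V →L[ℝ] V →L[ℝ] ℝ) (E : Submodule ℝ V) : Prop :=
  ∀ u ∈ E, (∀ w ∈ E, B u w = 0) → u = 0

/-- `P` is the `B`-orthogonal projection onto the subspace `E`, for a form `B` that need not be
definite. -/
structure IsOrthProj (B : V →L[ℝ] V →L[ℝ] ℝ) (E : Submodule ℝ V) (P : V →L[ℝ] V) : Prop where
  mem : ∀ x, P x ∈ E
  orthogonal : ∀ x, ∀ w ∈ E, B (x - P x) w = 0

variable {B : V →L[ℝ] V →L[ℝ] ℝ} {E : Submodule ℝ V} {P P' : V →L[ℝ] V}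

theorem IsOrthProj.form_apply (hP : IsOrthProj B E P) (x : V) {w : V} (hw : w ∈ E) :
    B (P x) w = B x w :=
  (sub_eq_zero.mp (by simpa using hP.orthogonal x w hw)).symm

theorem IsOrthProj.apply_eq_of_orthogonal (hP : IsOrthProj B E P) (hB : NondegenerateOn B E)
    {x u : V} (hu : u ∈ E) (hxu : ∀ w ∈ E, B x w = B u w) : P x = u :=
  sub_eq_zero.mp <| hB _ (E.sub_mem (hP.mem x) hu) fun w hw => by
    simp [hP.form_apply x hw, hxu w hw]

theorem IsOrthProj.apply_of_mem (hP : IsOrthProj B E P) (hB : NondegenerateOn B E) {x : V}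
    (hx : x ∈ E) : P x = x :=
  hP.apply_eq_of_orthogonal hB hx fun _ _ => rfl

theorem IsOrthProj.isIdempotentElem (hP : IsOrthProj B E P) (hB : NondegenerateOn B E) :
    IsIdempotentElem P :=
  ContinuousLinearMap.ext fun x => hP.apply_of_mem hB (hP.mem x)

theorem IsOrthProj.apply_eq_zero_iff (hP : IsOrthProj B E P) (hB : NondegenerateOn B E) {x : V} :
    P x = 0 ↔ ∀ w ∈ E, B x w = 0 :=
  ⟨fun hx w hw => by rw [← hP.form_apply x hw, hx]; simp,
    fun hx => hP.apply_eq_of_orthogonal hB E.zero_mem fun w hw => by simp [hx w hw]⟩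

theorem IsOrthProj.eq (hP : IsOrthProj B E P) (hP' : IsOrthProj B E P')
    (hB : NondegenerateOn B E) : P = P' :=
  ContinuousLinearMap.ext fun x =>
    hP.apply_eq_of_orthogonal hB (hP'.mem x) fun _ hw => (hP'.form_apply x hw).symm

/-- The restriction `x ↦ B x (T ·)` of the form `B` to the range of a frame `T : F → V` in its
second argument. -/
def frameDual (B : V →L[ℝ] V →L[ℝ] ℝ) (T : F →L[ℝ] V) : V →L[ℝ] F →L[ℝ] ℝ :=
  (ContinuousLinearMap.compL ℝ F V ℝ).flip T ∘L B

/-- The `B`-orthogonal projection onto the range of a frame `T : F → V`, in the classical form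
`T (Tᵗ B T)⁻¹ Tᵗ B`. -/
def frameProj (B : V →L[ℝ] V →L[ℝ] ℝ) (T : F →L[ℝ] V) : V →L[ℝ] V :=
  T ∘L (frameDual B T ∘L T).inverse ∘L frameDual B T

variable [FiniteDimensional ℝ F]

theorem isInvertible_gram {T : F →L[ℝ] V} (hT : Function.Injective T)
    (hB : NondegenerateOn B T.range) : (frameDual B T ∘L T).IsInvertible := by
  have hinj : Function.Injective (frameDual B T ∘L T).toLinearMap := by
    refine (injective_iff_map_eq_zero _).mpr fun f hf => hT ?_
    rw [map_zero]
    refine hB _ ⟨f, rfl⟩ ?_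
    rintro _ ⟨g, rfl⟩
    exact congr($hf g)
  have hdim : Module.finrank ℝ F = Module.finrank ℝ (F →L[ℝ] ℝ) := by
    rw [← (LinearMap.toContinuousLinearMap (𝕜 := ℝ) (E := F) (F' := ℝ)).finrank_eq]
    exact Subspace.dual_finrank_eq.symm
  exact ⟨(LinearMap.linearEquivOfInjective _ hinj hdim).toContinuousLinearEquiv,
    ContinuousLinearMap.ext fun _ => rfl⟩

theorem isOrthProj_frameProj {T : F →L[ℝ] V} (hT : Function.Injective T)
    (hB : NondegenerateOn B T.range) : IsOrthProj B T.range (frameProj B T) where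
  mem x := ⟨_, rfl⟩
  orthogonal x := by
    rintro _ ⟨g, rfl⟩
    have hinv := (isInvertible_gram hT hB).self_apply_inverse (frameDual B T x)
    rw [map_sub, sub_apply, sub_eq_zero]
    exact congr($hinv.symm g)

theorem contDiffAt_frameProj {T : ℝ → F →L[ℝ] V} {t : ℝ} (hT : ContDiffAt ℝ ∞ T t)
    (hinj : Function.Injective (T t)) (hB : NondegenerateOn B (T t).range) :
    ContDiffAt ℝ ∞ (fun r => frameProj B (T r)) t := by
  have : CompleteSpace F := FiniteDimensional.complete ℝ F
  have hdual : ContDiffAt ℝ ∞ (fun r => frameDual B (T r)) t :=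
    (contDiffAt_const.clm_apply hT).clm_comp contDiffAt_const
  have hinv : ContDiffAt ℝ ∞ (fun r => (frameDual B (T r) ∘L T r).inverse) t :=
    ContDiffAt.comp (g := ContinuousLinearMap.inverse) t
      (isInvertible_gram hinj hB).contDiffAt_map_inverse (hdual.clm_comp hT)
  exact hT.clm_comp (hinv.clm_comp hdual)

theorem exists_contDiff_isOrthProj {E : ℝ → Submodule ℝ V}
    (hB : ∀ t, NondegenerateOn B (E t))
    (hframe : ∀ t, ∃ T : ℝ → F →L[ℝ] V, ContDiffAt ℝ ∞ T t ∧
      ∀ᶠ r in 𝓝 t, Function.Injective (T r) ∧ (T r).range = E r) :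
    ∃ P : ℝ → V →L[ℝ] V, ContDiff ℝ ∞ P ∧ ∀ t, IsOrthProj B (E t) (P t) := by
  have hproj : ∀ {T : F →L[ℝ] V} {t}, Function.Injective T ∧ T.range = E t →
      IsOrthProj B (E t) (frameProj B T) := fun hT =>
    hT.2 ▸ isOrthProj_frameProj hT.1 (hT.2 ▸ hB _)
  choose T hT hTE using hframe
  have hP : ∀ t, IsOrthProj B (E t) (frameProj B (T t t)) := fun t => hproj (hTE t).self_of_nhds
  refine ⟨_, contDiff_iff_contDiffAt.mpr fun t => ?_, hP⟩
  obtain ⟨hinj, hrange⟩ := (hTE t).self_of_nhds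
  refine (contDiffAt_frameProj (hT t) hinj (hrange ▸ hB t)).congr_of_eventuallyEq ?_
  filter_upwards [hTE t] with r hr
  exact (hP r).eq (hproj hr) (hB r)

end OrthProj

theorem bilinear_deriv_add_eq_zero {B : V →L[ℝ] V →L[ℝ] ℝ} {f g : ℝ → V} {a t : ℝ}
    (hf : DifferentiableAt ℝ f t) (hg : DifferentiableAt ℝ g t)
    (hfg : ∀ᶠ r in 𝓝 t, B (f r) (g r) = a) : B (f t) (deriv g t) + B (deriv f t) (g t) = 0 := by
  have hconst : (fun r => B (f r) (g r)) =ᶠ[𝓝 t] fun _ => a := hfg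
  rw [← B.deriv_of_bilinear (fun _ => hf) (fun _ => hg), hconst.deriv_eq, deriv_const]

theorem contDiffAt_of_contDiffAt_comp {E F G : Type*} [NormedAddCommGroup E] [NormedSpace ℝ E]
    [CompleteSpace E] [NormedAddCommGroup F] [NormedSpace ℝ F] [NormedAddCommGroup G]
    [NormedSpace ℝ G] {n : WithTop ℕ∞} (hn : n ≠ 0) {φ : E → F} {x : G → E} {z : G}
    (hφ : ContDiffAt ℝ n φ (x z)) (hφ' : (fderiv ℝ φ (x z)).HasLeftInverse)
    (hx : ContinuousAt x z) (hφx : ContDiffAt ℝ n (φ ∘ x) z) : ContDiffAt ℝ n x z := by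
  obtain ⟨L, hL⟩ := hφ'
  have hLφ : ContDiffAt ℝ n (L ∘ φ) (x z) := L.contDiff.contDiffAt.comp _ hφ
  have hLφ' : HasFDerivAt (L ∘ φ) (ContinuousLinearEquiv.refl ℝ E : E →L[ℝ] E) (x z) :=
    (L.hasFDerivAt.comp _ (hφ.differentiableAt hn).hasFDerivAt).congr_fderiv
      (ContinuousLinearMap.ext hL)
  have hinv := (hLφ.hasStrictFDerivAt' hLφ' hn).eventually_left_inverse
  refine ContDiffAt.congr_of_eventuallyEq (f := hLφ.localInverse hLφ' hn ∘ L ∘ φ ∘ x) ?_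
    ((hx.eventually hinv).mono fun _ hr => hr.symm)
  exact (hLφ.to_localInverse hLφ' hn).comp z (L.contDiff.contDiffAt.comp z hφx)

theorem eventually_isInvertible [CompleteSpace V] {Φ : ℝ → V →L[ℝ] V} (hΦ : ContinuousAt Φ 0)
    (hΦ₀ : Φ 0 = .id ℝ V) : ∀ᶠ t in 𝓝 0, (Φ t).IsInvertible :=
  hΦ (by simpa [hΦ₀] using (ContinuousLinearEquiv.refl ℝ V).nhds)

theorem deriv_mem_of_eventually_mem {N : Submodule ℝ V} [FiniteDimensional ℝ N] {ζ : ℝ → V}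
    {t : ℝ} (hζ : DifferentiableAt ℝ ζ t) (hN : ∀ᶠ r in 𝓝 t, ζ r ∈ N) : deriv ζ t ∈ N := by
  refine N.closed_of_finiteDimensional.mem_of_tendsto hζ.hasDerivAt.tendsto_slope ?_
  filter_upwards [hN.filter_mono nhdsWithin_le_nhds] with r hr
  exact N.smul_mem _ (N.sub_mem hr hN.self_of_nhds)

theorem deriv_sub_mem_of_eventually_mem_map [CompleteSpace V] {Φ : ℝ → V →L[ℝ] V}
    (hΦ : DifferentiableAt ℝ Φ 0) (hΦ₀ : Φ 0 = .id ℝ V) {N : Submodule ℝ V}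
    [FiniteDimensional ℝ N] {ξ : ℝ → V} (hξ : DifferentiableAt ℝ ξ 0)
    (hN : ∀ᶠ t in 𝓝 0, ξ t ∈ N.map (Φ t).toLinearMap) :
    deriv ξ 0 - deriv Φ 0 (ξ 0) ∈ N := by
  set ζ : ℝ → V := fun t => (Φ t).inverse (ξ t)
  have hinv := eventually_isInvertible hΦ.continuousAt hΦ₀
  have hζ : DifferentiableAt ℝ ζ 0 :=
    (DifferentiableAt.comp (g := ContinuousLinearMap.inverse) 0
      (hinv.self_of_nhds.contDiffAt_map_inverse.differentiableAt one_ne_zero) hΦ).clm_apply hξ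
  have hζN : ∀ᶠ t in 𝓝 0, ζ t ∈ N := by
    filter_upwards [hinv, hN] with t ht ⟨y, hy, hyξ⟩
    have hζy : ζ t = y := by simpa [ζ, ← hyξ] using ht.inverse_apply_self y
    exact hζy ▸ hy
  have hξζ : ξ =ᶠ[𝓝 0] fun t => Φ t (ζ t) := by
    filter_upwards [hinv] with t ht
    exact (ht.self_apply_inverse (ξ t)).symm
  have hξ' : deriv ξ 0 = deriv Φ 0 (ζ 0) + Φ 0 (deriv ζ 0) :=
    hξζ.deriv_eq.trans (hΦ.hasDerivAt.clm_apply hζ.hasDerivAt).deriv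
  have hζ₀ : ζ 0 = ξ 0 := by simp [ζ, hΦ₀]
  rw [hξ', hζ₀, hΦ₀, add_sub_cancel_left]
  exact deriv_mem_of_eventually_mem hζ hζN

section SpaceForms

variable {k : SpaceFormKind} {D : ℕ} {S : Set (EuclideanSpace ℝ (Fin D))}
  {p q u v : EuclideanSpace ℝ (Fin D)}

theorem tangentAt_mono {S S' : Set (EuclideanSpace ℝ (Fin D))} (h : S ⊆ S')
    (p : EuclideanSpace ℝ (Fin D)) : TangentAt S p ≤ TangentAt S' p :=
  Submodule.span_mono fun _ ⟨c, hc, hcS, hc₀, hcv⟩ => ⟨c, hc, fun t => h (hcS t), hc₀, hcv⟩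

theorem deriv_mem_tangentAt {c : ℝ → EuclideanSpace ℝ (Fin D)} (hc : ContDiff ℝ ∞ c)
    (hcS : ∀ t, c t ∈ S) (t : ℝ) : deriv c t ∈ TangentAt S (c t) :=
  Submodule.subset_span ⟨fun r => c (t + r), hc.comp (contDiff_const.add contDiff_id),
    fun _ => hcS _, by simp, by simp [deriv_comp_const_add]⟩

theorem mem_tangentAt_of_eventually {c : ℝ → EuclideanSpace ℝ (Fin D)}
    (hc : ∀ᶠ t in 𝓝 0, ContDiffAt ℝ ∞ c t ∧ c t ∈ S) (hv : HasDerivAt c v 0) :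
    v ∈ TangentAt S (c 0) := by
  obtain ⟨s, hs, hcs⟩ := exists_isReparam_of_eventually hc
  exact Submodule.subset_span ⟨c ∘ s,
    contDiff_iff_contDiffAt.mpr fun t => (hcs t).1.comp t hs.contDiff.contDiffAt,
    fun t => (hcs t).2, by simp [hs.map_zero], (hs.hasDerivAt_comp hv).deriv⟩

/-- The ambient form `aForm` as a continuous bilinear map. -/
def ambientForm (k : SpaceFormKind) (D : ℕ) :
    EuclideanSpace ℝ (Fin D) →L[ℝ] EuclideanSpace ℝ (Fin D) →L[ℝ] ℝ :=
  (LinearMap.mk₂ ℝ (aForm k)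
    (fun x y z => by simp [aForm, mul_add, add_mul, Finset.sum_add_distrib])
    (fun a x y => by simp [aForm, Finset.mul_sum, mul_assoc, mul_left_comm])
    (fun x y z => by simp [aForm, mul_add, Finset.sum_add_distrib])
    (fun a x y => by
      simp [aForm, Finset.mul_sum, mul_left_comm])).toContinuousBilinearMap

theorem ambientForm_apply (x y : EuclideanSpace ℝ (Fin D)) :
    ambientForm k D x y = aForm k x y := rfl

theorem ambientForm_comm (x y : EuclideanSpace ℝ (Fin D)) :
    ambientForm k D x y = ambientForm k D y x := by
  simp only [ambientForm_apply, aForm, mul_right_comm]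

/-- The sectional curvature `κ` of the space form. Scaling the equations of the model by `κ`
makes them vacuous in the flat case, so that the three kinds can be treated together. -/
def curvature : SpaceFormKind → ℝ
  | .euclidean => 0
  | .sphere => 1
  | .hyperbolic => -1

theorem mem_spaceForm_iff : q ∈ spaceForm k D ↔
    curvature k * ambientForm k D q q = curvature k ^ 2 ∧
      (k = .hyperbolic → ∀ i : Fin D, (i : ℕ) + 1 = D → 0 < q i) := by
  cases k <;> simp [spaceForm, curvature, ambientForm_apply, neg_eq_iff_eq_neg]

theorem curvature_mul_eq_zero_of_mem_tangentAt (hv : v ∈ TangentAt (spaceForm k D) q) :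
    curvature k * ambientForm k D v q = 0 := by
  refine Submodule.span_induction ?_ (by simp)
    (fun x y _ _ hx hy => by simp [mul_add, hx, hy])
    (fun a x _ hx => by simp [mul_left_comm, hx]) hv
  rintro _ ⟨c, hc, hcS, rfl, rfl⟩
  have hdc := hc.differentiable (by simp) 0
  have hconst := bilinear_deriv_add_eq_zero (B := curvature k • ambientForm k D) hdc hdc
    (.of_forall fun t => (mem_spaceForm_iff.mp (hcS t)).1)
  simp only [smul_apply, smul_eq_mul, ambientForm_comm (c 0)] at hconst
  linarith

theorem curvature_pow_three (k : SpaceFormKind) : curvature k ^ 3 = curvature k := by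
  cases k <;> norm_num [curvature]

theorem eventually_mem_spaceForm {c : ℝ → EuclideanSpace ℝ (Fin D)} {t : ℝ}
    (hc : ContinuousAt c t) (hct : c t ∈ spaceForm k D)
    (hform : ∀ᶠ r in 𝓝 t, curvature k * ambientForm k D (c r) (c r) = curvature k ^ 2) :
    ∀ᶠ r in 𝓝 t, c r ∈ spaceForm k D := by
  have hpos : ∀ᶠ r in 𝓝 t, k = .hyperbolic → ∀ i : Fin D, (i : ℕ) + 1 = D → 0 < c r i := by
    simp only [eventually_imp_distrib_left, eventually_all]
    intro hk i hi
    have hci : ContinuousAt (fun r => c r i) t :=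
      (EuclideanSpace.proj (𝕜 := ℝ) i).continuous.continuousAt.comp hc
    exact hci.eventually_const_lt ((mem_spaceForm_iff.mp hct).2 hk i hi)
  exact (hform.and hpos).mono fun _ => mem_spaceForm_iff.mpr

theorem mem_tangentAt_spaceForm (hq : q ∈ spaceForm k D)
    (hv : curvature k * ambientForm k D v q = 0) : v ∈ TangentAt (spaceForm k D) q := by
  set g : ℝ → ℝ := fun t => 1 - curvature k * ambientForm k D v v * t ^ 2
  set c : ℝ → EuclideanSpace ℝ (Fin D) := fun t => √(g t) • q + t • v
  have hg₀ : g 0 = 1 := by simp [g]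
  have hc₀ : c 0 = q := by simp [c, hg₀]
  have hg' : HasDerivAt g 0 0 := by
    simpa [g] using ((hasDerivAt_pow 2 (0 : ℝ)).const_mul
      (curvature k * ambientForm k D v v)).const_sub 1
  have hc' : HasDerivAt c v 0 := by
    have hsqrt := (hg'.sqrt (by simp [hg₀])).smul_const q
    simpa using hsqrt.fun_add ((hasDerivAt_id' (0 : ℝ)).smul_const v)
  have hg_pos : ∀ᶠ t in 𝓝 0, 0 < g t :=
    hg'.continuousAt.eventually_const_lt (by simp [hg₀])
  have hform : ∀ᶠ t in 𝓝 0, curvature k * ambientForm k D (c t) (c t) = curvature k ^ 2 := by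
    filter_upwards [hg_pos] with t ht
    simp only [c, map_add, map_smul, add_apply, smul_apply, smul_eq_mul, ambientForm_comm q v]
    linear_combination curvature k * ambientForm k D q q * Real.mul_self_sqrt ht.le
      + 2 * √(g t) * t * hv + g t * (mem_spaceForm_iff.mp hq).1
      - t ^ 2 * ambientForm k D v v * curvature_pow_three k
  rw [← hc₀] at hq ⊢
  refine mem_tangentAt_of_eventually ?_ hc'
  filter_upwards [hg_pos, eventually_mem_spaceForm hc'.continuousAt hq hform] with t ht hct
  have hg : ContDiffAt ℝ ∞ g t := by fun_prop
  exact ⟨((hg.sqrt ht.ne').smul contDiffAt_const).add (contDiffAt_id.smul contDiffAt_const), hct⟩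

theorem aForm_hyperbolic_succ {d : ℕ} (x y : EuclideanSpace ℝ (Fin (d + 1))) :
    aForm .hyperbolic x y =
      ∑ i : Fin d, x i.castSucc * y i.castSucc - x (Fin.last d) * y (Fin.last d) := by
  have hspace : ∀ i : Fin d, formSign .hyperbolic (d + 1) i.castSucc = 1 := fun i => by
    simp [formSign, i.isLt.ne]
  have htime : formSign .hyperbolic (d + 1) (Fin.last d) = -1 := by simp [formSign]
  simp only [aForm, Fin.sum_univ_castSucc, hspace, htime, one_mul, neg_mul, sub_eq_add_neg]

theorem aForm_eq_inner (hk : k ≠ .hyperbolic) (x y : EuclideanSpace ℝ (Fin D)) :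
    aForm k x y = inner ℝ x y := by
  cases k <;> simp_all [aForm, formSign, PiLp.inner_apply, mul_comm]

theorem eq_zero_of_aForm_hyperbolic_self {d : ℕ} {q u : EuclideanSpace ℝ (Fin (d + 1))}
    (hq : aForm .hyperbolic q q = -1) (huq : aForm .hyperbolic u q = 0)
    (huu : aForm .hyperbolic u u = 0) : u = 0 := by
  rw [aForm_hyperbolic_succ] at hq huq huu
  have hcs := Finset.sum_mul_sq_le_sq_mul_sq Finset.univ (fun i : Fin d => u i.castSucc)
    (fun i => q i.castSucc)
  simp only [pow_two] at hcs
  rw [sub_eq_zero.mp huu, sub_eq_zero.mp huq, sub_eq_iff_eq_add.mp hq] at hcs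
  have hlast : u (Fin.last d) = 0 := by nlinarith
  rw [hlast, mul_zero, sub_zero, Finset.sum_eq_zero_iff_of_nonneg fun _ _ => mul_self_nonneg _]
    at huu
  ext i
  induction i using Fin.lastCases with
  | last => exact hlast
  | cast j => exact mul_self_eq_zero.mp (huu j (Finset.mem_univ j))

theorem eq_zero_of_mem_tangentAt_spaceForm (hq : q ∈ spaceForm k D)
    (hu : u ∈ TangentAt (spaceForm k D) q) (huu : aForm k u u = 0) : u = 0 := by
  by_cases hk : k = .hyperbolic
  · subst hk
    have huq : aForm .hyperbolic u q = 0 := by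
      simpa [curvature, ambientForm_apply] using curvature_mul_eq_zero_of_mem_tangentAt hu
    cases D with
    | zero => exact Subsingleton.elim _ _
    | succ d => exact eq_zero_of_aForm_hyperbolic_self hq.1 huq huu
  · rwa [aForm_eq_inner hk, inner_self_eq_zero] at huu

theorem nondegenerateOn_tangentAt (hSF : S ⊆ spaceForm k D) (hp : p ∈ S) :
    NondegenerateOn (ambientForm k D) (TangentAt S p) :=
  fun u hu huE => eq_zero_of_mem_tangentAt_spaceForm (hSF hp) (tangentAt_mono hSF p hu) (huE u hu)

end SpaceForms

section Submanifolds

namespace IsLocalParam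

variable {D n : ℕ} {S : Set (EuclideanSpace ℝ (Fin D))} {U : Set (EuclideanSpace ℝ (Fin n))}
  {φ : EuclideanSpace ℝ (Fin n) → EuclideanSpace ℝ (Fin D)} {p : EuclideanSpace ℝ (Fin D)}
  {x : EuclideanSpace ℝ (Fin n)} {c : ℝ → EuclideanSpace ℝ (Fin D)} {t : ℝ}

theorem map_mem (h : IsLocalParam S n φ U p) (hx : x ∈ U) : φ x ∈ S := by
  obtain ⟨V, -, hV⟩ := h.openImage
  exact (hV.subset (mem_image_of_mem φ hx)).1

theorem contDiffAt (h : IsLocalParam S n φ U p) (hx : x ∈ U) : ContDiffAt ℝ ∞ φ x :=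
  h.smooth.contDiffAt (h.isOpen.mem_nhds hx)

theorem injective_fderiv (h : IsLocalParam S n φ U p) (hx : x ∈ U) :
    Function.Injective (fderiv ℝ φ x) :=
  fderivWithin_of_isOpen (𝕜 := ℝ) (f := φ) h.isOpen hx ▸ h.immersion x hx

theorem exists_lift (h : IsLocalParam S n φ U p) (hc : ContDiffAt ℝ ∞ c t) (hcS : ∀ r, c r ∈ S)
    (ht : c t ∈ φ '' U) :
    ∃ x : ℝ → EuclideanSpace ℝ (Fin n), ContDiffAt ℝ ∞ x t ∧
      ∀ᶠ r in 𝓝 t, x r ∈ U ∧ φ (x r) = c r := by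
  obtain ⟨ψ, hψ, hψφ⟩ := h.embedding
  obtain ⟨V, hV, hUV⟩ := h.openImage
  have hcU : ∀ᶠ r in 𝓝 t, c r ∈ φ '' U := by
    filter_upwards [hc.continuousAt (hV.mem_nhds (hUV.subset ht).2)] with r hr
    exact hUV.superset ⟨hcS r, hr⟩
  have hlift : ∀ {q}, q ∈ φ '' U → ψ q ∈ U ∧ φ (ψ q) = q := by
    rintro _ ⟨y, hy, rfl⟩
    rw [hψφ y hy]
    exact ⟨hy, rfl⟩
  have hx : ContinuousAt (ψ ∘ c) t :=
    (hψ _ ht).tendsto.comp (tendsto_nhdsWithin_iff.mpr ⟨hc.continuousAt, hcU⟩)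
  refine ⟨ψ ∘ c, contDiffAt_of_contDiffAt_comp (by simp) (h.contDiffAt (hlift ht).1)
    (.of_injective_of_finiteDimensional (h.injective_fderiv (hlift ht).1)) hx ?_,
    hcU.mono fun _ => hlift⟩
  exact hc.congr_of_eventuallyEq (hcU.mono fun _ hr => (hlift hr).2)

theorem tangentAt_eq_range (h : IsLocalParam S n φ U p) (hx : x ∈ U) :
    TangentAt S (φ x) = (fderiv ℝ φ x).range := by
  have hφ : ∀ {y}, y ∈ U → HasFDerivAt φ (fderiv ℝ φ y) y := fun hy =>
    ((h.contDiffAt hy).differentiableAt (by simp)).hasFDerivAt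
  refine le_antisymm (Submodule.span_le.mpr ?_) ?_
  · rintro _ ⟨c, hc, hcS, hc₀, rfl⟩
    obtain ⟨y, hy, hφy⟩ := h.exists_lift hc.contDiffAt hcS (hc₀ ▸ mem_image_of_mem φ hx)
    obtain ⟨hy₀, hφy₀⟩ := hφy.self_of_nhds
    have hyx : y 0 = x := h.injOn hy₀ hx (hφy₀.trans hc₀)
    have hcomp := (hφ hy₀).comp_hasDerivAt 0 (hy.differentiableAt (by simp)).hasDerivAt
    have hcy : c =ᶠ[𝓝 0] φ ∘ y := hφy.mono fun r hr => hr.2.symm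
    exact ⟨deriv y 0, by rw [hcy.deriv_eq, hcomp.deriv, hyx]; rfl⟩
  · rintro _ ⟨a, rfl⟩
    have hline : HasDerivAt (fun t : ℝ => x + t • a) a 0 := by
      simpa using ((hasDerivAt_id' (0 : ℝ)).smul_const a).const_add x
    have hx₀ : x + (0 : ℝ) • a = x := by simp
    have hcurve := HasFDerivAt.comp_hasDerivAt 0 (hx₀.symm ▸ hφ hx) hline
    have hU : ∀ᶠ t in 𝓝 (0 : ℝ), x + t • a ∈ U :=
      hline.continuousAt.eventually_mem (by rw [hx₀]; exact h.isOpen.mem_nhds hx)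
    have hmem := mem_tangentAt_of_eventually (S := S) (hU.mono fun t ht =>
      ⟨(h.contDiffAt ht).comp t (by fun_prop), h.map_mem ht⟩) hcurve
    simpa using hmem

end IsLocalParam

theorem exists_tangent_frame {D n : ℕ} {S : Set (EuclideanSpace ℝ (Fin D))}
    (hS : IsSubmanifold S n) {c : ℝ → EuclideanSpace ℝ (Fin D)} (hc : ContDiff ℝ ∞ c)
    (hcS : ∀ t, c t ∈ S) (t : ℝ) :
    ∃ T : ℝ → EuclideanSpace ℝ (Fin n) →L[ℝ] EuclideanSpace ℝ (Fin D), ContDiffAt ℝ ∞ T t ∧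
      ∀ᶠ r in 𝓝 t, Function.Injective (T r) ∧ (T r).range = TangentAt S (c r) := by
  obtain ⟨φ, U, hφ⟩ := hS (c t) (hcS t)
  obtain ⟨x, hx, hxU⟩ := hφ.exists_lift hc.contDiffAt hcS hφ.mem
  refine ⟨fun r => fderiv ℝ φ (x r), ?_, ?_⟩
  · exact ((hφ.contDiffAt hxU.self_of_nhds.1).fderiv_right (m := ∞) (by simp)).comp t hx
  · filter_upwards [hxU] with r ⟨hrU, hr⟩
    exact ⟨hφ.injective_fderiv hrU, hr ▸ (hφ.tangentAt_eq_range hrU).symm⟩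

theorem exists_tangentProj {k : SpaceFormKind} {D n : ℕ} {S : Set (EuclideanSpace ℝ (Fin D))}
    (hSF : S ⊆ spaceForm k D) (hS : IsSubmanifold S n) {c : ℝ → EuclideanSpace ℝ (Fin D)}
    (hc : ContDiff ℝ ∞ c) (hcS : ∀ t, c t ∈ S) :
    ∃ Q : ℝ → EuclideanSpace ℝ (Fin D) →L[ℝ] EuclideanSpace ℝ (Fin D), ContDiff ℝ ∞ Q ∧
      ∀ t, IsOrthProj (ambientForm k D) (TangentAt S (c t)) (Q t) :=
  exists_contDiff_isOrthProj (fun t => nondegenerateOn_tangentAt hSF (hcS t))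
    (exists_tangent_frame hS hc hcS)

end Submanifolds

section NormalTransport

variable {k : SpaceFormKind} {D n m : ℕ} {S : Set (EuclideanSpace ℝ (Fin D))}
  {c : ℝ → EuclideanSpace ℝ (Fin D)}

/-- `Φ t` is normal parallel transport along the curve `c` from `c 0` to `c t`. It is encoded by
endomorphisms of the ambient linear space, whose values on vectors that are not normal to `S` at
`c 0` are irrelevant. -/
structure IsNormalTransport (k : SpaceFormKind) (S : Set (EuclideanSpace ℝ (Fin D)))
    (c : ℝ → EuclideanSpace ℝ (Fin D))
    (Φ : ℝ → EuclideanSpace ℝ (Fin D) →L[ℝ] EuclideanSpace ℝ (Fin D)) : Prop where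
  contDiff : ContDiff ℝ ∞ Φ
  map_zero : Φ 0 = .id ℝ (EuclideanSpace ℝ (Fin D))
  isNormalVec : ∀ η, IsNormalVec k S (c 0) η → ∀ t, IsNormalVec k S (c t) (Φ t η)
  deriv_mem : ∀ η, IsNormalVec k S (c 0) η →
    ∀ t, deriv (fun r => Φ r η) t ∈ TangentAt S (c t)

theorem isNormalVec_of_deriv_mem_tangentAt (hSF : S ⊆ spaceForm k D) (hc : ContDiff ℝ ∞ c)
    (hcS : ∀ t, c t ∈ S) {η : ℝ → EuclideanSpace ℝ (Fin D)} (hη : Differentiable ℝ η)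
    (horth : ∀ t, ∀ w ∈ TangentAt S (c t), ambientForm k D (η t) w = 0)
    (hη' : ∀ t, deriv η t ∈ TangentAt S (c t)) (h0 : IsNormalVec k S (c 0) (η 0)) (t : ℝ) :
    IsNormalVec k S (c t) (η t) := by
  set B := curvature k • ambientForm k D
  have hder : ∀ r, HasDerivAt (fun r => B (η r) (c r)) 0 r := fun r => by
    have hη'r : curvature k * ambientForm k D (deriv η r) (c r) = 0 :=
      curvature_mul_eq_zero_of_mem_tangentAt (tangentAt_mono hSF _ (hη' r))
    have hsum : B (η r) (deriv c r) + B (deriv η r) (c r) = 0 := by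
      simp [B, horth r _ (deriv_mem_tangentAt hc hcS r), hη'r]
    exact hsum ▸ B.hasDerivAt_of_bilinear (fun _ => (hη r).hasDerivAt)
      (fun _ => hasDerivAt_deriv_of_contDiff hc r)
  have hconst : B (η t) (c t) = B (η 0) (c 0) :=
    is_const_of_deriv_eq_zero (fun r => (hder r).differentiableAt) (fun r => (hder r).deriv) t 0
  exact ⟨mem_tangentAt_spaceForm (hSF (hcS t))
    (hconst.trans (curvature_mul_eq_zero_of_mem_tangentAt h0.1)), horth t⟩

-- A solution of `η' = -Q' η` that starts normal stays normal, since `Q ∘ Q = Q` gives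
-- `(Q η)' = Q' (Q η)`; differentiating `Q η = 0` then gives `η' = Q η'`, so `η` is parallel.
theorem exists_isNormalTransport (hSF : S ⊆ spaceForm k D) (hS : IsSubmanifold S n)
    (hc : ContDiff ℝ ∞ c) (hcS : ∀ t, c t ∈ S) :
    ∃ s Φ, IsReparam s ∧ IsNormalTransport k S (c ∘ s) Φ := by
  obtain ⟨Q, hQ, hproj⟩ := exists_tangentProj hSF hS hc hcS
  obtain ⟨s, Φ, hs, hΦ, hΦ₀, hΦ'⟩ := exists_isReparam_hasDerivAt_neg_deriv_comp hQ
  have hB : ∀ t, NondegenerateOn (ambientForm k D) (TangentAt S (c t)) := fun t =>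
    nondegenerateOn_tangentAt hSF (hcS t)
  have hQs : ContDiff ℝ 1 (Q ∘ s) := (hQ.comp hs.contDiff).of_le (by simp)
  have hidem : ∀ t, IsIdempotentElem ((Q ∘ s) t) := fun t => (hproj (s t)).isIdempotentElem (hB _)
  have hη : ∀ η t, HasDerivAt (fun t => Φ t η) (-deriv (Q ∘ s) t (Φ t η)) t := fun η t => by
    simpa using (hΦ' t).clm_apply (hasDerivAt_const t η)
  have h0 : ∀ η, IsNormalVec k S ((c ∘ s) 0) η → (Q ∘ s) 0 (Φ 0 η) = 0 := fun η hη₀ =>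
    ((hproj (s 0)).apply_eq_zero_iff (hB _)).mpr fun w hw => by
      simpa [hΦ₀, ambientForm_apply] using hη₀.2 w hw
  have hderiv : ∀ η, IsNormalVec k S ((c ∘ s) 0) η → ∀ t,
      deriv (fun t => Φ t η) t ∈ TangentAt S ((c ∘ s) t) := fun η hη₀ t => by
    rw [deriv_eq_idempotent_apply_of_hasDerivAt hQs hidem (hη η) (h0 η hη₀) t]
    exact (hproj (s t)).mem _
  refine ⟨s, Φ, hs, hΦ, hΦ₀, fun η hη₀ => ?_, hderiv⟩
  refine isNormalVec_of_deriv_mem_tangentAt hSF (hc.comp hs.contDiff) (fun t => hcS _)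
    (fun t => (hη η t).differentiableAt) (fun t => ?_) (hderiv η hη₀) (by simpa [hΦ₀] using hη₀)
  exact ((hproj (s t)).apply_eq_zero_iff (hB _)).mp
    (idempotent_apply_eq_zero_of_hasDerivAt hQs hidem (hη η) (h0 η hη₀) t)

variable {ν₁ : EuclideanSpace ℝ (Fin D) → Submodule ℝ (EuclideanSpace ℝ (Fin D))}

theorem IsNormalTransport.eventually_map_eq
    {Φ : ℝ → EuclideanSpace ℝ (Fin D) →L[ℝ] EuclideanSpace ℝ (Fin D)}
    (hΦ : IsNormalTransport k S c Φ) (hν : IsParallelNormalSubbundle k S ν₁ m)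
    (hc : ContDiff ℝ ∞ c) (hcS : ∀ t, c t ∈ S) :
    ∀ᶠ t in 𝓝 0, (ν₁ (c 0)).map (Φ t).toLinearMap = ν₁ (c t) := by
  filter_upwards [eventually_isInvertible hΦ.contDiff.continuous.continuousAt hΦ.map_zero]
    with t ht
  have hle : (ν₁ (c 0)).map (Φ t).toLinearMap ≤ ν₁ (c t) := by
    rintro _ ⟨η, hη, rfl⟩
    have hη₀ := hν.normal _ (hcS 0) η hη
    refine hν.parallel c (fun t => Φ t η) hc hcS (hΦ.contDiff.clm_apply contDiff_const)
      (hΦ.isNormalVec η hη₀) (fun r => Submodule.mem_sup_left (hΦ.deriv_mem η hη₀ r))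
      (by simpa [hΦ.map_zero]) t
  refine Submodule.eq_of_le_of_finrank_eq hle ?_
  rw [← (Submodule.equivMapOfInjective _ ht.injective _).finrank_eq, hν.rank _ (hcS 0),
    hν.rank _ (hcS t)]

theorem deriv_mem_sup_tangentAt (hSF : S ⊆ spaceForm k D) (hS : IsSubmanifold S n)
    (hν : IsParallelNormalSubbundle k S ν₁ m) (hc : ContDiff ℝ ∞ c) (hcS : ∀ t, c t ∈ S)
    {ξ : ℝ → EuclideanSpace ℝ (Fin D)} (hξ : ContDiff ℝ ∞ ξ) (hξν : ∀ t, ξ t ∈ ν₁ (c t)) :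
    deriv ξ 0 ∈ ν₁ (c 0) ⊔ TangentAt S (c 0) := by
  obtain ⟨s, Φ, hs, hΦ⟩ := exists_isNormalTransport hSF hS hc hcS
  have hcs₀ : (c ∘ s) 0 = c 0 := by simp [hs.map_zero]
  have hξs₀ : (ξ ∘ s) 0 = ξ 0 := by simp [hs.map_zero]
  have hmap := hΦ.eventually_map_eq hν (hc.comp hs.contDiff) fun t => hcS (s t)
  have hsub := deriv_sub_mem_of_eventually_mem_map
    (hΦ.contDiff.differentiable (by simp) 0) hΦ.map_zero
    ((hξ.comp hs.contDiff).differentiable (by simp) 0)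
    (hmap.mono fun t ht => ht ▸ hξν (s t))
  have htan := hΦ.deriv_mem (ξ 0) (hcs₀ ▸ hν.normal _ (hcS 0) _ (hξν 0)) 0
  have hΦξ := (hasDerivAt_deriv_of_contDiff hΦ.contDiff 0).clm_apply (hasDerivAt_const 0 (ξ 0))
  rw [hΦξ.deriv, map_zero, add_zero, hcs₀] at htan
  rw [hcs₀, hξs₀, (hs.hasDerivAt_comp (hasDerivAt_deriv_of_contDiff hξ 0)).deriv] at hsub
  exact sub_add_cancel (deriv ξ 0) (deriv Φ 0 (ξ 0)) ▸ Submodule.add_mem_sup hsub htan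

end NormalTransport

section GaussMap

variable {k : SpaceFormKind} {D n m : ℕ} {S : Set (EuclideanSpace ℝ (Fin D))}
  {ν₁ : EuclideanSpace ℝ (Fin D) → Submodule ℝ (EuclideanSpace ℝ (Fin D))}
  {c ξ W : ℝ → EuclideanSpace ℝ (Fin D)} {η : EuclideanSpace ℝ (Fin D)}

theorem exists_section_eq (hν : IsParallelNormalSubbundle k S ν₁ m) (hc : ContDiff ℝ ∞ c)
    (hcS : ∀ t, c t ∈ S) (hη : η ∈ ν₁ (c 0)) :
    ∃ s ξ, IsReparam s ∧ ContDiff ℝ ∞ ξ ∧ (∀ t, ξ t ∈ ν₁ (c (s t))) ∧ ξ 0 = η := by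
  obtain ⟨V, hV, f, hf, hfν⟩ := hν.smooth (c 0) (hcS 0)
  obtain ⟨s, hs, hcV⟩ := exists_isReparam_of_eventually (hc.continuous.continuousAt.eventually hV)
  rw [hfν _ ⟨mem_of_mem_nhds hV, hcS 0⟩, Submodule.mem_span_range_iff_exists_fun] at hη
  obtain ⟨a, rfl⟩ := hη
  refine ⟨s, fun t => ∑ i, a i • f i (c (s t)), hs,
    ContDiff.sum fun i _ => ((hf i).comp (hc.comp hs.contDiff)).const_smul (a i), fun t => ?_,
    by simp [hs.map_zero]⟩
  rw [hfν _ ⟨hcV t, hcS _⟩, Submodule.mem_span_range_iff_exists_fun]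
  exact ⟨a, rfl⟩

theorem ambientForm_deriv_add_eq_zero (hν : IsParallelNormalSubbundle k S ν₁ m)
    (hcS : ∀ t, c t ∈ S) (hξ : DifferentiableAt ℝ ξ 0) (hξν : ∀ t, ξ t ∈ ν₁ (c t))
    (hW : DifferentiableAt ℝ W 0) (hWT : ∀ t, W t ∈ TangentAt S (c t)) :
    ambientForm k D (ξ 0) (deriv W 0) + ambientForm k D (deriv ξ 0) (W 0) = 0 :=
  bilinear_deriv_add_eq_zero hξ hW <| .of_forall fun t =>
    (hν.normal _ (hcS t) _ (hξν t)).2 _ (hWT t)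

theorem deriv_mem_of_mem_gNullityAt (hSF : S ⊆ spaceForm k D) (hS : IsSubmanifold S n)
    (hν : IsParallelNormalSubbundle k S ν₁ m) (hc : ContDiff ℝ ∞ c) (hcS : ∀ t, c t ∈ S)
    (hv : deriv c 0 ∈ gNullityAt k S ν₁ (c 0)) (hξ : ContDiff ℝ ∞ ξ)
    (hξν : ∀ t, ξ t ∈ ν₁ (c t)) : deriv ξ 0 ∈ ν₁ (c 0) := by
  obtain ⟨Q, hQ, hproj⟩ := exists_tangentProj hSF hS hc hcS
  have hB := nondegenerateOn_tangentAt hSF (hcS 0)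
  have horth : ∀ w ∈ TangentAt S (c 0), ambientForm k D (deriv ξ 0) w = 0 := fun w hw => by
    have hW : ContDiff ℝ ∞ fun t => Q t w := hQ.clm_apply contDiff_const
    have hWT : ∀ t, Q t w ∈ TangentAt S (c t) := fun t => (hproj t).mem w
    have hshape := hv.2 c _ hc hcS rfl rfl hW hWT (ξ 0) (hξν 0)
    have hsum := ambientForm_deriv_add_eq_zero hν hcS (hξ.differentiable (by simp) 0) hξν
      (hW.differentiable (by simp) 0) hWT
    rwa [ambientForm_comm, ambientForm_apply, hshape, zero_add,
      (hproj 0).apply_of_mem hB hw] at hsum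
  obtain ⟨a, ha, u, hu, hau⟩ :=
    Submodule.mem_sup.mp (deriv_mem_sup_tangentAt hSF hS hν hc hcS hξ hξν)
  have hu₀ : u = 0 := hB u hu fun w hw => by
    have hsum := horth w hw
    rwa [← hau, map_add, add_apply, ambientForm_apply a,
      (hν.normal _ (hcS 0) a ha).2 w hw, zero_add] at hsum
  rwa [← hau, hu₀, add_zero]

theorem aForm_deriv_eq_zero_of_forall_deriv_mem (hν : IsParallelNormalSubbundle k S ν₁ m)
    (hc : ContDiff ℝ ∞ c) (hcS : ∀ t, c t ∈ S)
    (hstat : ∀ c' ξ : ℝ → EuclideanSpace ℝ (Fin D), ContDiff ℝ ∞ c' → (∀ t, c' t ∈ S) →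
      c' 0 = c 0 → deriv c' 0 = deriv c 0 → ContDiff ℝ ∞ ξ → (∀ t, ξ t ∈ ν₁ (c' t)) →
      deriv ξ 0 ∈ ν₁ (c 0))
    (hW : ContDiff ℝ ∞ W) (hWT : ∀ t, W t ∈ TangentAt S (c t)) (hη : η ∈ ν₁ (c 0)) :
    aForm k (deriv W 0) η = 0 := by
  obtain ⟨s, ξ, hs, hξ, hξν, rfl⟩ := exists_section_eq hν hc hcS hη
  have hξ' : deriv ξ 0 ∈ ν₁ (c 0) := hstat (c ∘ s) ξ (hc.comp hs.contDiff) (fun t => hcS _)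
    (by simp [hs.map_zero]) (hs.hasDerivAt_comp (hasDerivAt_deriv_of_contDiff hc 0)).deriv hξ hξν
  have hsum := ambientForm_deriv_add_eq_zero (W := W ∘ s) hν (fun t => hcS (s t))
    (hξ.differentiable (by simp) 0) hξν ((hW.comp hs.contDiff).differentiable (by simp) 0)
    fun t => hWT (s t)
  rwa [(hs.hasDerivAt_comp (hasDerivAt_deriv_of_contDiff hW 0)).deriv, Function.comp_apply,
    hs.map_zero, ambientForm_apply (deriv ξ 0), (hν.normal _ (hcS 0) _ hξ').2 _ (hWT 0), add_zero,
    ambientForm_comm, ambientForm_apply] at hsum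

end GaussMap

end

/-- **The kernel of the generalized Gauss map is the generalized nullity space.**
Let `M = S` be an `n`-dimensional submanifold of a space form, and let `ν₁` be a parallel rank `m`
sub-bundle of the normal bundle of `M`.  Consider the generalized Gauss map `G₁ : p ↦ ν₁(p)` into
the Grassmannian of `m`-dimensional linear subspaces of the ambient linear space.  Then, for every
`p ∈ M`, the kernel of the differential `d(G₁)_p` equals the generalized nullity space `𝒩¹_p`,
the common kernel of the shape operators of vectors in `ν₁(p)`.  Here a tangent vector `v` lies in
the kernel of `d(G₁)_p` iff for every smooth curve `c` in `S` with `c(0) = p`, `c'(0) = v`, the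
family of subspaces `ν₁(c(t))` is stationary at `t = 0`, i.e. every smooth section `ξ` of `ν₁`
along `c` has `ξ'(0) ∈ ν₁(p)`. -/
theorem generalized_gauss_map_kernel (k : SpaceFormKind) (n codim m : ℕ)
    (S : Set (EuclideanSpace ℝ (Fin (ambientDim k n codim))))
    (ν₁ : EuclideanSpace ℝ (Fin (ambientDim k n codim)) →
      Submodule ℝ (EuclideanSpace ℝ (Fin (ambientDim k n codim))))
    (hSF : S ⊆ spaceForm k (ambientDim k n codim))
    (hsub : IsSubmanifold S n)
    (hbundle : IsParallelNormalSubbundle k S ν₁ m) :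
    ∀ p ∈ S, ∀ v : EuclideanSpace ℝ (Fin (ambientDim k n codim)),
      (v ∈ gNullityAt k S ν₁ p ↔
        v ∈ TangentAt S p ∧
        ∀ c ξ : ℝ → EuclideanSpace ℝ (Fin (ambientDim k n codim)),
          ContDiff ℝ (⊤ : ℕ∞) c → (∀ t, c t ∈ S) → c 0 = p → deriv c 0 = v →
          ContDiff ℝ (⊤ : ℕ∞) ξ → (∀ t, ξ t ∈ ν₁ (c t)) →
          deriv ξ 0 ∈ ν₁ p) := by
  intro p _ v
  constructor
  · intro hv
    refine ⟨hv.1, ?_⟩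
    rintro c ξ hc hcS rfl rfl hξ hξν
    exact deriv_mem_of_mem_gNullityAt hSF hsub hbundle hc hcS hv hξ hξν
  · rintro ⟨hv, hstat⟩
    refine ⟨hv, ?_⟩
    rintro c W hc hcS rfl rfl hW hWT η hη
    exact aForm_deriv_eq_zero_of_forall_deriv_mem hbundle hc hcS hstat hW hWT hη
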